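/- There exists a function f : [0,1]^2 → ℝ which belongs to C^{1,α}([0,1]^2) for every α ∈ (0,1), which has the weak Sard property but does not have the relaxed Sard property. -/

import Mathlib

open MeasureTheory Set

noncomputable section

/-- The unit square `[0,1]²` in the Euclidean plane. -/
def unitSquare : Set (EuclideanSpace ℝ (Fin 2)) := {x | ∀ i, x i ∈ Set.Icc (0:ℝ) 1}

/-- The critical set of `f : [0,1]² → ℝ`: points of the square where `f` is either not
differentiable or has vanishing gradient. -/
def critSet (f : EuclideanSpace ℝ (Fin 2) → ℝ) : Set (EuclideanSpace ℝ (Fin 2)) :=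
  {x | x ∈ unitSquare ∧
    (¬ DifferentiableWithinAt ℝ f unitSquare x ∨ fderivWithin ℝ f unitSquare x = 0)}

/-- The set `E* = ⋃ₜ Eₜ*`: the union over `t` of all connected components of the level set
`Eₜ = {f = t}` having strictly positive one-dimensional Hausdorff measure. -/
def Estar (f : EuclideanSpace ℝ (Fin 2) → ℝ) : Set (EuclideanSpace ℝ (Fin 2)) :=
  {x | 0 < μH[1] (connectedComponentIn (unitSquare ∩ f ⁻¹' {f x}) x)}

/-- `f` is of class `C^{1,α}` on `[0,1]²`: continuously differentiable with gradient
Hölder continuous of exponent `α`. -/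
def IsC1Holder (f : EuclideanSpace ℝ (Fin 2) → ℝ) (α : ℝ) : Prop :=
  DifferentiableOn ℝ f unitSquare ∧
  ContinuousOn (fderivWithin ℝ f unitSquare) unitSquare ∧
  ∃ C : ℝ, ∀ x ∈ unitSquare, ∀ y ∈ unitSquare,
    ‖fderivWithin ℝ f unitSquare x - fderivWithin ℝ f unitSquare y‖ ≤ C * dist x y ^ α

/-!
The counterexample is `f p = V (p 0) + 2 * V (p 1)`, where `V = ∑ₘ 4⁻⁽ᵐ⁺¹⁾ sₘ` and `sₘ` equals the
binary digit of index `m` of its argument away from thin moats around the dyadic points of level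
`m + 1`. Since `V'` vanishes at the points lying in no moat, the points of the square with both
coordinates of this kind are critical; they form a set of positive measure, on which `f` reads off
the base-`4` number whose digits interleave the binary digits of the two coordinates. The image
under `f` of Lebesgue measure on this set is therefore absolutely continuous, and the relaxed Sard
property fails.

The weak Sard property comes from dips of relative depth `m`, carved by `sₘ` at the dyadic points.
By Borel-Cantelli, the coordinates of almost every critical point `p` avoid all moats of large
level. On the boundary of the dyadic box of level `n` around `p`, the error `O(4⁻ⁿ)` in comparing
`f` with `f p` is then outweighed by the dips, which lower `f` by a multiple of `n 4⁻ⁿ`. So the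
level set of `f` through `p` misses the boundaries of arbitrarily small boxes, its connected
component at `p` is a point, and `S ∩ E^*` is Lebesgue null.
-/

open scoped NNReal ENNReal

namespace SardCounterexample

section Holder

variable {X E : Type*} [PseudoMetricSpace X]

lemma holderWith_of_norm_le_of_lipschitzWith [SeminormedAddCommGroup E] {g : X → E} {b K α : ℝ≥0}
    (hb : ∀ x, ‖g x‖ ≤ b) (hK : LipschitzWith K g) (hα : α ≤ 1) :
    HolderWith ((2 * b) ^ (1 - α : ℝ) * K ^ (α : ℝ)) α g := by
  have h0 : HolderWith (2 * b) 0 g := fun x y => by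
    rw [NNReal.coe_zero, ENNReal.rpow_zero, mul_one, edist_nndist, ENNReal.coe_le_coe,
      ← NNReal.coe_le_coe, coe_nndist]
    calc dist (g x) (g y) ≤ ‖g x‖ + ‖g y‖ := dist_le_norm_add_norm _ _
      _ ≤ b + b := add_le_add (hb x) (hb y)
      _ = (2 * b : ℝ≥0) := by push_cast; ring
  have h := h0.interpolate hK.holderWith (tsub_add_cancel_of_le hα)
  rwa [zero_mul, one_mul, zero_add, NNReal.coe_sub hα, NNReal.coe_one] at h

lemma holderWith_tsum {ι : Type*} [NormedAddCommGroup E] {g : ι → X → E} {C : ι → ℝ≥0} {α : ℝ≥0}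
    (hg : ∀ i, HolderWith (C i) α (g i)) (hC : Summable C) (hs : ∀ x, Summable fun i => g i x) :
    HolderWith (∑' i, C i) α fun x => ∑' i, g i x := by
  intro x y
  have hle : ∀ i, ‖g i x - g i y‖₊ ≤ C i * nndist x y ^ (α : ℝ) := fun i => by
    rw [← nndist_eq_nnnorm]
    exact (hg i).nndist_le x y
  have hsum : Summable fun i => C i * nndist x y ^ (α : ℝ) := hC.mul_right _
  rw [edist_nndist, edist_nndist, ← ENNReal.coe_rpow_of_nonneg _ α.coe_nonneg, ← ENNReal.coe_mul,
    ENNReal.coe_le_coe, nndist_eq_nnnorm, ← (hs x).tsum_sub (hs y), ← NNReal.tsum_mul_right]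
  have hn : Summable fun i => ‖g i x - g i y‖₊ := NNReal.summable_of_le hle hsum
  exact (nnnorm_tsum_le hn).trans (Summable.tsum_mono hn hsum hle)

end Holder

lemma summable_succ_pow_mul_geometric (k : ℕ) {r : ℝ} (hr : ‖r‖ < 1) :
    Summable fun m : ℕ => ((m : ℝ) + 1) ^ k * r ^ (m + 1) := by
  simpa using (summable_nat_add_iff (f := fun m : ℕ => (m : ℝ) ^ k * r ^ m) 1).2
    (summable_pow_mul_geometric_of_norm_lt_one k hr)

lemma abs_sub_sub_deriv_mul_le {g : ℝ → ℝ} {K : ℝ≥0} (hg : Differentiable ℝ g)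
    (hK : LipschitzWith K (deriv g)) (x y : ℝ) :
    |g y - g x - deriv g x * (y - x)| ≤ K * (y - x) ^ 2 := by
  have h := Convex.norm_image_sub_le_of_norm_hasDerivWithin_le
    (f := fun z => g z - deriv g x * z) (f' := fun z => deriv g z - deriv g x)
    (C := K * |y - x|) (s := uIcc x y)
    (fun z _ => ((hg z).hasDerivAt.sub
      (by simpa using (hasDerivAt_id z).const_mul _)).hasDerivWithinAt)
    (fun z hz => (hK.norm_sub_le z x).trans
      (mul_le_mul_of_nonneg_left (abs_sub_left_of_mem_uIcc hz) K.coe_nonneg))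
    (convex_uIcc x y) left_mem_uIcc right_mem_uIcc
  rw [Real.norm_eq_abs, Real.norm_eq_abs, mul_assoc, abs_mul_abs_self, ← sq] at h
  convert h using 2
  ring

lemma connectedComponentIn_subset_singleton {X : Type*} [TopologicalSpace X] {S : Set X} {p : X}
    (h : ∀ q ∈ S, q ≠ p → ∃ U, p ∈ interior U ∧ q ∉ U ∧ Disjoint (frontier U) S) :
    connectedComponentIn S p ⊆ {p} := by
  intro q hq
  by_contra hne
  have hS : p ∈ S := connectedComponentIn_nonempty_iff.1 ⟨q, hq⟩
  obtain ⟨U, hpU, hqU, hU⟩ := h q (connectedComponentIn_subset S p hq) hne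
  have hcover : connectedComponentIn S p ⊆ interior U ∪ (closure U)ᶜ := fun z hz => by
    by_contra hz'
    rw [mem_union, not_or, notMem_compl_iff] at hz'
    exact disjoint_left.1 hU ⟨hz'.2, hz'.1⟩ (connectedComponentIn_subset S p hz)
  have hsub := isPreconnected_connectedComponentIn.subset_left_of_subset_union isOpen_interior
    isClosed_closure.isOpen_compl
    (disjoint_compl_right_iff_subset.2 (interior_subset.trans subset_closure)) hcover
    ⟨p, mem_connectedComponentIn hS, hpU⟩
  exact hqU (interior_subset (hsub hq))

lemma absolutelyContinuous_of_measure_le_geometric {ν : Measure ℝ} {C r : ℝ≥0} (hr0 : 0 < r)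
    (hr1 : r < 1)
    (h : ∀ (n : ℕ) (s : Set ℝ), Metric.ediam s ≤ (r : ℝ≥0∞) ^ n → ν s ≤ C * (r : ℝ≥0∞) ^ n) :
    ν ≪ volume := by
  have hr : r ≠ 0 := hr0.ne'
  have hlin : ∀ s : Set ℝ, Metric.ediam s ≤ 1 → ν s ≤ (C / r : ℝ≥0) * Metric.ediam s := by
    intro s hs
    lift Metric.ediam s to ℝ≥0 using ne_top_of_le_ne_top ENNReal.one_ne_top hs with d hd
    have hd1 : d ≤ 1 := by exact_mod_cast hs
    rcases eq_zero_or_pos d with rfl | hd0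
    · have hlim : Filter.Tendsto (fun n : ℕ => (C : ℝ≥0∞) * (r : ℝ≥0∞) ^ n) Filter.atTop
          (nhds (C * 0)) :=
        ENNReal.Tendsto.const_mul (ENNReal.tendsto_pow_atTop_nhds_zero_of_lt_one
          (by exact_mod_cast hr1)) (Or.inr ENNReal.coe_ne_top)
      simpa using ge_of_tendsto' hlim fun n => h n s (by simp [← hd])
    · obtain ⟨n, hn_lt, hn_le⟩ := exists_nat_pow_near_of_lt_one hd0 hd1 hr0 hr1
      calc ν s ≤ C * (r : ℝ≥0∞) ^ n := h n s (by rw [← hd]; exact_mod_cast hn_le)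
        _ = (C / r : ℝ≥0) * (r ^ (n + 1) : ℝ≥0) := by
          norm_cast
          rw [pow_succ]
          field_simp
        _ ≤ (C / r : ℝ≥0) * d := by gcongr
  have hle : (C / r + 1 : ℝ≥0∞)⁻¹ • ν ≤ μH[1] := by
    refine Measure.le_hausdorffMeasure 1 _ 1 one_pos fun s hs => ?_
    rw [ENNReal.rpow_one, Measure.smul_apply, smul_eq_mul,
      ENNReal.inv_mul_le_iff (by simp) (by simp [ENNReal.div_eq_top, hr])]
    grw [hlin s hs, ENNReal.coe_div hr, ← le_self_add]
  rw [hausdorffMeasure_real] at hle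
  exact (Measure.absolutelyContinuous_smul (by simp [ENNReal.div_eq_top, hr])).trans
    (Measure.absolutelyContinuous_of_le hle)

section Digits

variable {b : ℕ}

/-- The integer whose base-`b` digits are `d 0, …, d (n - 1)`, most significant digit first. -/
def digitPrefix (d : ℕ → Fin b) : ℕ → ℕ
  | 0 => 0
  | n + 1 => b * digitPrefix d n + d n

lemma digitPrefix_eq_iff {d e : ℕ → Fin b} {n : ℕ} :
    digitPrefix d n = digitPrefix e n ↔ ∀ i < n, d i = e i := by
  induction n with
  | zero => simp [digitPrefix]
  | succ n ih =>
    rw [Nat.forall_lt_succ_right, ← ih, digitPrefix, digitPrefix]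
    refine ⟨fun h => ?_, fun ⟨hP, hd⟩ => by rw [hP, hd]⟩
    have hmod := congrArg (· % b) h
    have hdiv := congrArg (· / b) h
    have hb : 0 < b := (d n).pos
    simp only [Nat.mul_add_mod, Nat.mod_eq_of_lt (Fin.is_lt _), Nat.mul_add_div hb,
      Nat.div_eq_of_lt (Fin.is_lt _), add_zero] at hmod hdiv
    exact ⟨hdiv, Fin.ext hmod⟩

lemma sum_ofDigitsTerm_eq_digitPrefix_div (d : ℕ → Fin b) (n : ℕ) :
    ∑ i ∈ Finset.range n, Real.ofDigitsTerm d i = digitPrefix d n / (b : ℝ) ^ n := by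
  have hb : (b : ℝ) ≠ 0 := Nat.cast_ne_zero.2 (d 0).pos.ne'
  induction n with
  | zero => simp [digitPrefix]
  | succ n ih =>
    rw [Finset.sum_range_succ, ih, digitPrefix, Real.ofDigitsTerm]
    push_cast
    field

lemma pow_mul_ofDigits_mem_Icc (d : ℕ → Fin b) (n : ℕ) :
    (b : ℝ) ^ n * Real.ofDigits d ∈ Icc (digitPrefix d n : ℝ) (digitPrefix d n + 1) := by
  have hb : (b : ℝ) ≠ 0 := Nat.cast_ne_zero.2 (d 0).pos.ne'
  have h : (b : ℝ) ^ n * Real.ofDigits d =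
      digitPrefix d n + Real.ofDigits fun i => d (i + n) := by
    rw [Real.ofDigits_eq_sum_add_ofDigits d n, sum_ofDigitsTerm_eq_digitPrefix_div]
    field
  rw [h]
  exact ⟨le_add_of_nonneg_right (Real.ofDigits_nonneg _),
    add_le_add_right (Real.ofDigits_le_one _) _⟩

lemma digitPrefix_le_add_two {d e : ℕ → Fin b} {n : ℕ}
    (h : |Real.ofDigits d - Real.ofDigits e| ≤ ((b : ℝ) ^ n)⁻¹) :
    digitPrefix d n ≤ digitPrefix e n + 2 := by
  have hb : 0 < (b : ℝ) ^ n := pow_pos (Nat.cast_pos.2 (d 0).pos) n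
  have hmul : (b : ℝ) ^ n * (Real.ofDigits d - Real.ofDigits e) ≤ 1 := by
    rw [← mul_inv_cancel₀ hb.ne']
    gcongr
    exact (le_abs_self _).trans h
  have hd := (pow_mul_ofDigits_mem_Icc d n).1
  have he := (pow_mul_ofDigits_mem_Icc e n).2
  have : (digitPrefix d n : ℝ) ≤ digitPrefix e n + 2 := by linarith
  exact_mod_cast this

section Cylinders

variable {X : Type*} [MeasurableSpace X] {μ : Measure X} {d : X → ℕ → Fin b} {n : ℕ} {ε : ℝ≥0∞}

lemma measure_digitPrefix_eq_le (hcyl : ∀ w : ℕ → Fin b, μ {x | ∀ i < n, d x i = w i} ≤ ε) (k : ℕ) :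
    μ {x | digitPrefix (d x) n = k} ≤ ε := by
  obtain hempty | ⟨x, rfl⟩ := {x | digitPrefix (d x) n = k}.eq_empty_or_nonempty
  · simp [hempty]
  · simpa only [digitPrefix_eq_iff] using hcyl (d x)

lemma measure_preimage_ofDigits_le (hcyl : ∀ w : ℕ → Fin b, μ {x | ∀ i < n, d x i = w i} ≤ ε)
    {s : Set ℝ} (hs : Metric.ediam s ≤ ((b : ℝ≥0∞) ^ n)⁻¹) :
    μ ((fun x => Real.ofDigits (d x)) ⁻¹' s) ≤ 5 * ε := by
  obtain hempty | ⟨x₀, hx₀⟩ := ((fun x => Real.ofDigits (d x)) ⁻¹' s).eq_empty_or_nonempty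
  · simp [hempty]
  set P := digitPrefix (d x₀) n
  have hcover : (fun x => Real.ofDigits (d x)) ⁻¹' s ⊆
      ⋃ k ∈ Finset.Icc (P - 2) (P + 2), {x | digitPrefix (d x) n = k} := by
    intro x hx
    have hb : (b : ℝ≥0) ^ n ≠ 0 := pow_ne_zero n (Nat.cast_ne_zero.2 (d x 0).pos.ne')
    have hdist : |Real.ofDigits (d x) - Real.ofDigits (d x₀)| ≤ ((b : ℝ) ^ n)⁻¹ := by
      have h : edist (Real.ofDigits (d x)) (Real.ofDigits (d x₀)) ≤ ((b : ℝ≥0∞) ^ n)⁻¹ :=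
        (Metric.edist_le_ediam_of_mem (mem_preimage.1 hx) (mem_preimage.1 hx₀)).trans hs
      rw [edist_nndist, ← ENNReal.coe_natCast, ← ENNReal.coe_pow, ← ENNReal.coe_inv hb,
        ENNReal.coe_le_coe] at h
      exact_mod_cast h
    have h₁ := digitPrefix_le_add_two hdist
    have h₂ := digitPrefix_le_add_two (abs_sub_comm (Real.ofDigits (d x)) _ ▸ hdist)
    simp only [Finset.mem_Icc, mem_iUnion, mem_ofPred_eq, exists_prop, exists_eq_right']
    omega
  calc μ ((fun x => Real.ofDigits (d x)) ⁻¹' s)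
      ≤ ∑ k ∈ Finset.Icc (P - 2) (P + 2), μ {x | digitPrefix (d x) n = k} :=
        (measure_mono hcover).trans (measure_biUnion_finset_le _ _)
    _ ≤ (Finset.Icc (P - 2) (P + 2)).card • ε :=
        Finset.sum_le_card_nsmul _ _ _ fun k _ => measure_digitPrefix_eq_le hcyl k
    _ ≤ 5 * ε := by
        rw [nsmul_eq_mul]
        gcongr
        have : (Finset.Icc (P - 2) (P + 2)).card ≤ 5 := by rw [Nat.card_Icc]; omega
        exact_mod_cast this

theorem map_ofDigits_absolutelyContinuous {C : ℝ≥0} (hb : 1 < b)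
    (hmeas : AEMeasurable (fun x => Real.ofDigits (d x)) μ)
    (hcyl : ∀ (n : ℕ) (w : ℕ → Fin b), μ {x | ∀ i < n, d x i = w i} ≤ C * ((b : ℝ≥0∞) ^ n)⁻¹) :
    μ.map (fun x => Real.ofDigits (d x)) ≪ volume := by
  have hb0 : (0 : ℝ≥0) < b := by positivity
  refine absolutelyContinuous_of_measure_le_geometric (C := 5 * C) (r := (b : ℝ≥0)⁻¹)
    (inv_pos.2 hb0) (inv_lt_one_of_one_lt₀ (by exact_mod_cast hb)) fun n s hs => ?_
  have hr : ((b : ℝ≥0)⁻¹ : ℝ≥0) ^ n = ((b : ℝ≥0∞) ^ n)⁻¹ := by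
    rw [ENNReal.coe_inv hb0.ne', ENNReal.inv_pow, ENNReal.coe_natCast]
  rw [hr] at hs ⊢
  refine (measure_mono subset_closure).trans ?_
  rw [Measure.map_apply_of_aemeasurable hmeas isClosed_closure.measurableSet, ENNReal.coe_mul,
    mul_assoc]
  exact measure_preimage_ofDigits_le (hcyl n) (by rwa [Metric.ediam_closure])

end Cylinders

end Digits

section Separable

variable {ι : Type*} [Fintype ι]

/-- The linear form `p ↦ ∑ i, a i * p i`, in which differentials of separable functions
`p ↦ ∑ i, φ i (p i)` are expressed. -/
def coordForm (a : ι → ℝ) : EuclideanSpace ℝ ι →L[ℝ] ℝ := ∑ i, a i • EuclideanSpace.proj i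

lemma coordForm_apply (a : ι → ℝ) (p : EuclideanSpace ℝ ι) : coordForm a p = ∑ i, a i * p i := by
  simp [coordForm]

lemma coordForm_eq_zero_iff {a : ι → ℝ} : coordForm a = 0 ↔ ∀ i, a i = 0 := by
  classical
  refine ⟨fun h i => ?_, fun h => by simp [coordForm, h]⟩
  simpa [coordForm_apply, Pi.single_apply] using
    DFunLike.congr_fun h (EuclideanSpace.single i (1 : ℝ))

lemma continuous_coordForm : Continuous (coordForm : (ι → ℝ) → EuclideanSpace ℝ ι →L[ℝ] ℝ) :=
  continuous_finsetSum _ fun i _ => (continuous_apply i).smul continuous_const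

lemma norm_coordForm_sub_le (a b : ι → ℝ) :
    ‖coordForm a - coordForm b‖ ≤ ∑ i, dist (a i) (b i) := by
  refine ContinuousLinearMap.opNorm_le_bound _ (Finset.sum_nonneg fun i _ => dist_nonneg)
    fun p => ?_
  rw [sub_apply, coordForm_apply, coordForm_apply, ← Finset.sum_sub_distrib, Finset.sum_mul]
  refine norm_sum_le_of_le _ fun i _ => ?_
  rw [← sub_mul, norm_mul, dist_eq_norm]
  gcongr
  exact PiLp.norm_apply_le p i

variable {φ ψ : ι → ℝ → ℝ}

lemma hasFDerivAt_sum_apply (h : ∀ i t, HasDerivAt (φ i) (ψ i t) t) (p : EuclideanSpace ℝ ι) :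
    HasFDerivAt (fun p : EuclideanSpace ℝ ι => ∑ i, φ i (p i))
      (coordForm fun i => ψ i (p i)) p :=
  HasFDerivAt.fun_sum fun i _ =>
    (h i (p i)).comp_hasFDerivAt p (EuclideanSpace.proj (𝕜 := ℝ) i).hasFDerivAt

lemma norm_coordForm_comp_sub_le {α : ℝ≥0} {C : ι → ℝ≥0} (h : ∀ i, HolderWith (C i) α (ψ i))
    (p q : EuclideanSpace ℝ ι) :
    ‖coordForm (fun i => ψ i (p i)) - coordForm fun i => ψ i (q i)‖ ≤
      (∑ i, C i : ℝ≥0) * dist p q ^ (α : ℝ) := by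
  refine (norm_coordForm_sub_le _ _).trans ?_
  rw [NNReal.coe_sum, Finset.sum_mul]
  gcongr with i
  calc dist (ψ i (p i)) (ψ i (q i)) ≤ C i * dist (p i) (q i) ^ (α : ℝ) := (h i).dist_le _ _
    _ ≤ C i * dist p q ^ (α : ℝ) := by
        gcongr
        simpa [dist_eq_norm] using PiLp.norm_apply_le (p - q) i

end Separable

section UnitSquare

lemma convex_unitSquare : Convex ℝ unitSquare :=
  fun _ hx _ hy _ _ ha hb hab i => convex_Icc (0 : ℝ) 1 (hx i) (hy i) ha hb hab

lemma uniqueDiffOn_unitSquare : UniqueDiffOn ℝ unitSquare := by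
  refine uniqueDiffOn_convex convex_unitSquare ⟨WithLp.toLp 2 fun _ => 1 / 2, ?_⟩
  refine mem_interior_iff_mem_nhds.2 (Filter.eventually_all.2 fun i => ?_)
  exact (EuclideanSpace.proj (𝕜 := ℝ) i).continuous.continuousAt.preimage_mem_nhds
    (Icc_mem_nhds (by norm_num) (by norm_num))

variable {φ ψ : Fin 2 → ℝ → ℝ}

lemma fderivWithin_unitSquare_sum_apply (h : ∀ i t, HasDerivAt (φ i) (ψ i t) t)
    {p : EuclideanSpace ℝ (Fin 2)} (hp : p ∈ unitSquare) :
    fderivWithin ℝ (fun p => ∑ i, φ i (p i)) unitSquare p = coordForm fun i => ψ i (p i) :=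
  (hasFDerivAt_sum_apply h p).hasFDerivWithinAt.fderivWithin (uniqueDiffOn_unitSquare p hp)

lemma isC1Holder_sum_apply {α : ℝ≥0} (hα : 0 < α) {C : Fin 2 → ℝ≥0}
    (h : ∀ i t, HasDerivAt (φ i) (ψ i t) t) (hψ : ∀ i, HolderWith (C i) α (ψ i)) :
    IsC1Holder (fun p => ∑ i, φ i (p i)) α := by
  refine ⟨fun p _ => (hasFDerivAt_sum_apply h p).differentiableAt.differentiableWithinAt, ?_,
    (∑ i, C i : ℝ≥0), fun p hp q hq => ?_⟩
  · have hcont : Continuous fun p : EuclideanSpace ℝ (Fin 2) => coordForm fun i => ψ i (p i) :=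
      continuous_coordForm.comp (continuous_pi fun i =>
        ((hψ i).continuous hα).comp (EuclideanSpace.proj (𝕜 := ℝ) i).continuous)
    exact hcont.continuousOn.congr fun p hp => fderivWithin_unitSquare_sum_apply h hp
  · rw [fderivWithin_unitSquare_sum_apply h hp, fderivWithin_unitSquare_sum_apply h hq]
    exact norm_coordForm_comp_sub_le hψ p q

lemma mem_critSet_sum_apply_iff (h : ∀ i t, HasDerivAt (φ i) (ψ i t) t)
    {p : EuclideanSpace ℝ (Fin 2)} :
    p ∈ critSet (fun p => ∑ i, φ i (p i)) ↔ p ∈ unitSquare ∧ ∀ i, ψ i (p i) = 0 := by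
  have hdiff : DifferentiableWithinAt ℝ (fun p => ∑ i, φ i (p i)) unitSquare p :=
    (hasFDerivAt_sum_apply h p).differentiableAt.differentiableWithinAt
  refine and_congr_right fun hp => ?_
  rw [or_iff_right (not_not_intro hdiff), fderivWithin_unitSquare_sum_apply h hp,
    coordForm_eq_zero_iff]

end UnitSquare

section Volume

variable {ι : Type*} [Fintype ι]

lemma volume_setOf_forall_apply_mem (s : ι → Set ℝ) :
    volume {p : EuclideanSpace ℝ ι | ∀ i, p i ∈ s i} = ∏ i, volume (s i) := by
  rw [← volume_pi_pi,
    ← (EuclideanSpace.volume_preserving_symm_measurableEquiv_toLp ι).measure_preimage_equiv]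
  congr 1
  ext p
  simp

lemma volume_setOf_apply_mem_eq_zero (i : ι) {s : Set ℝ} (hs : volume s = 0) :
    volume {p : EuclideanSpace ℝ ι | p i ∈ s} = 0 :=
  ((Measure.quasiMeasurePreserving_eval (fun _ : ι => (volume : Measure ℝ)) i).comp
    (PiLp.volume_preserving_ofLp ι).quasiMeasurePreserving).preimage_null hs

end Volume

lemma exists_deriv_bounds_of_deriv_eq_zero {h : ℝ → ℝ} (hc : ContDiff ℝ 2 h)
    (hz : ∀ v, 1 ≤ |v| → deriv h v = 0) :
    ∃ B : ℝ≥0, (∀ v, ‖deriv h v‖ ≤ B) ∧ LipschitzWith B (deriv h) := by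
  have hd : ContDiff ℝ 1 (deriv h) := (contDiff_succ_iff_deriv (n := 1).1 hc).2.2
  have hs : HasCompactSupport (deriv h) :=
    HasCompactSupport.intro (isCompact_Icc (a := (-1 : ℝ)) (b := 1)) fun v hv =>
      hz v (le_of_not_ge fun h => hv (abs_le.1 h))
  obtain ⟨K, hK⟩ := hd.lipschitzWith_of_hasCompactSupport hs one_ne_zero
  obtain ⟨D, hD⟩ := hd.continuous.bounded_above_of_compact_support hs
  exact ⟨max K D.toNNReal, fun v => (hD v).trans ((Real.le_coe_toNNReal D).trans (by simp)),
    hK.weaken (le_max_left _ _)⟩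

section Comp

variable {h u : ℝ → ℝ} {B L a c : ℝ≥0}

lemma deriv_fun_comp (hh : Differentiable ℝ h) (hu : Differentiable ℝ u) :
    (deriv fun x => h (u x)) = fun x => deriv h (u x) * deriv u x :=
  funext fun x => ((hh (u x)).hasDerivAt.comp x (hu x).hasDerivAt).deriv

lemma norm_deriv_comp_le (hh : Differentiable ℝ h) (hu : Differentiable ℝ u)
    (hB : ∀ v, ‖deriv h v‖ ≤ B) (ha : ∀ x, ‖deriv u x‖ ≤ a) (x : ℝ) :
    ‖deriv (fun x => h (u x)) x‖ ≤ (B * a : ℝ≥0) := by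
  simp only [deriv_fun_comp hh hu, norm_mul, NNReal.coe_mul]
  exact mul_le_mul (hB _) (ha x) (norm_nonneg _) B.coe_nonneg

lemma lipschitzWith_deriv_comp (hh : Differentiable ℝ h) (hu : Differentiable ℝ u)
    (hB : ∀ v, ‖deriv h v‖ ≤ B) (hL : LipschitzWith L (deriv h)) (ha : ∀ x, ‖deriv u x‖ ≤ a)
    (hc : LipschitzWith c (deriv u)) :
    LipschitzWith (L * a ^ 2 + B * c) (deriv fun x => h (u x)) := by
  have hu' : LipschitzWith a u := lipschitzWith_of_nnnorm_deriv_le hu fun x => ha x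
  rw [deriv_fun_comp hh hu]
  refine LipschitzWith.of_dist_le_mul fun x y => ?_
  rw [dist_eq_norm]
  calc ‖deriv h (u x) * deriv u x - deriv h (u y) * deriv u y‖
      = ‖(deriv h (u x) - deriv h (u y)) * deriv u x +
          deriv h (u y) * (deriv u x - deriv u y)‖ := by ring_nf
    _ ≤ ‖deriv h (u x) - deriv h (u y)‖ * ‖deriv u x‖ +
          ‖deriv h (u y)‖ * ‖deriv u x - deriv u y‖ := by
        rw [← norm_mul, ← norm_mul]
        exact norm_add_le _ _
    _ ≤ (L * (a * dist x y)) * a + B * (c * dist x y) := by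
        simp only [← dist_eq_norm]
        gcongr
        · exact ((hL.comp hu').dist_le_mul x y).trans_eq (by push_cast; ring)
        · exact ha x
        · exact hB _
        · exact hc.dist_le_mul x y
    _ = (L * a ^ 2 + B * c : ℝ≥0) * dist x y := by push_cast; ring

end Comp

section Profile

/-- A smooth step equal to `1` on `(-∞, -1]` and to `0` on `[0, ∞)`. -/
def smoothStep (v : ℝ) : ℝ := Real.smoothTransition (-v)

/-- A smooth bump supported in `[-1, 1]`, equal to `1` at `0`. -/
def smoothBump (v : ℝ) : ℝ := Real.smoothTransition (1 - v ^ 2)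

/-- A smooth step with a dip of depth `d` carved at `0`. -/
def dippedStep (d : ℕ) (v : ℝ) : ℝ := smoothStep v - d * smoothBump v

lemma smoothStep_of_nonneg {v : ℝ} (hv : 0 ≤ v) : smoothStep v = 0 :=
  Real.smoothTransition.zero_of_nonpos (neg_nonpos.2 hv)

lemma smoothStep_of_le_neg_one {v : ℝ} (hv : v ≤ -1) : smoothStep v = 1 :=
  Real.smoothTransition.one_of_one_le (le_neg.2 hv)

lemma smoothBump_nonneg (v : ℝ) : 0 ≤ smoothBump v := Real.smoothTransition.nonneg _

lemma smoothBump_of_one_le_abs {v : ℝ} (hv : 1 ≤ |v|) : smoothBump v = 0 :=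
  Real.smoothTransition.zero_of_nonpos (sub_nonpos.2 ((one_le_sq_iff_one_le_abs _).2 hv))

lemma contDiff_smoothStep : ContDiff ℝ 2 smoothStep :=
  Real.smoothTransition.contDiff.comp contDiff_neg

lemma contDiff_smoothBump : ContDiff ℝ 2 smoothBump :=
  Real.smoothTransition.contDiff.comp (by fun_prop)

lemma deriv_smoothStep_of_one_le_abs {v : ℝ} (hv : 1 ≤ |v|) : deriv smoothStep v = 0 := by
  obtain hv | hv := le_abs.1 hv
  · refine IsLocalMin.deriv_eq_zero (Filter.Eventually.of_forall fun w => ?_)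
    rw [smoothStep_of_nonneg (zero_le_one.trans hv)]
    exact Real.smoothTransition.nonneg _
  · refine IsLocalMax.deriv_eq_zero (Filter.Eventually.of_forall fun w => ?_)
    rw [smoothStep_of_le_neg_one (le_neg.1 hv)]
    exact Real.smoothTransition.le_one _

lemma deriv_smoothBump_of_one_le_abs {v : ℝ} (hv : 1 ≤ |v|) : deriv smoothBump v = 0 :=
  IsLocalMin.deriv_eq_zero (Filter.Eventually.of_forall fun w =>
    (smoothBump_of_one_le_abs hv).trans_le (smoothBump_nonneg w))

variable (d : ℕ)

lemma differentiable_smoothStep : Differentiable ℝ smoothStep :=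
  contDiff_smoothStep.differentiable two_ne_zero

lemma differentiable_smoothBump : Differentiable ℝ smoothBump :=
  contDiff_smoothBump.differentiable two_ne_zero

lemma differentiable_dippedStep : Differentiable ℝ (dippedStep d) :=
  differentiable_smoothStep.sub (differentiable_smoothBump.const_mul _)

lemma deriv_dippedStep :
    deriv (dippedStep d) = fun v => deriv smoothStep v - d * deriv smoothBump v :=
  funext fun v => ((differentiable_smoothStep v).hasDerivAt.sub
    ((differentiable_smoothBump v).hasDerivAt.const_mul _)).deriv

lemma deriv_dippedStep_of_one_le_abs {v : ℝ} (hv : 1 ≤ |v|) : deriv (dippedStep d) v = 0 := by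
  simp only [deriv_dippedStep, deriv_smoothStep_of_one_le_abs hv,
    deriv_smoothBump_of_one_le_abs hv, mul_zero, sub_zero]

lemma exists_deriv_dippedStep_bounds :
    ∃ B : ℝ≥0, ∀ d : ℕ, (∀ v, ‖deriv (dippedStep d) v‖ ≤ (B * (d + 1) : ℝ≥0)) ∧
      LipschitzWith (B * (d + 1)) (deriv (dippedStep d)) := by
  obtain ⟨B₁, hB₁, hL₁⟩ := exists_deriv_bounds_of_deriv_eq_zero contDiff_smoothStep
    fun _ => deriv_smoothStep_of_one_le_abs
  obtain ⟨B₂, hB₂, hL₂⟩ := exists_deriv_bounds_of_deriv_eq_zero contDiff_smoothBump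
    fun _ => deriv_smoothBump_of_one_le_abs
  refine ⟨B₁ + B₂, fun d => ?_⟩
  have hconst : B₁ + d * B₂ ≤ (B₁ + B₂) * (d + 1) := by
    have : (B₁ + B₂) * (d + 1) = B₁ + d * B₂ + (B₁ * d + B₂) := by ring
    rw [this]
    exact le_self_add
  rw [deriv_dippedStep]
  constructor
  · intro v
    calc ‖deriv smoothStep v - d * deriv smoothBump v‖
        ≤ ‖deriv smoothStep v‖ + d * ‖deriv smoothBump v‖ := by
          simpa using norm_sub_le (deriv smoothStep v) (d * deriv smoothBump v)
      _ ≤ (B₁ + d * B₂ : ℝ≥0) := by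
          push_cast
          gcongr
          exacts [hB₁ v, hB₂ v]
      _ ≤ _ := NNReal.coe_le_coe.2 hconst
  · have h := hL₁.sub ((lipschitzWith_smul (d : ℝ)).comp hL₂)
    simp only [Real.nnnorm_natCast] at h
    exact h.weaken hconst

lemma dippedStep_le_one (v : ℝ) : dippedStep d v ≤ 1 :=
  (sub_le_self _ (mul_nonneg d.cast_nonneg (smoothBump_nonneg v))).trans
    (Real.smoothTransition.le_one _)

lemma abs_dippedStep_le (v : ℝ) : |dippedStep d v| ≤ d + 1 := by
  refine abs_le.2 ⟨?_, (dippedStep_le_one d v).trans (by simp)⟩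
  have hstep : 0 ≤ smoothStep v := Real.smoothTransition.nonneg _
  have hbump : d * smoothBump v ≤ d :=
    mul_le_of_le_one_right d.cast_nonneg (Real.smoothTransition.le_one _)
  rw [dippedStep]
  linarith

lemma dippedStep_zero : dippedStep d 0 = -d := by
  have hbump : smoothBump 0 = 1 := Real.smoothTransition.one_of_one_le (by norm_num)
  rw [dippedStep, smoothStep_of_nonneg le_rfl, hbump]
  ring

lemma dippedStep_nonpos {v : ℝ} (hv : 0 ≤ v) : dippedStep d v ≤ 0 := by
  rw [dippedStep, smoothStep_of_nonneg hv, zero_sub, neg_nonpos]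
  exact mul_nonneg d.cast_nonneg (smoothBump_nonneg v)

lemma dippedStep_of_one_le_abs {v : ℝ} (hv : 1 ≤ |v|) : dippedStep d v = smoothStep v := by
  rw [dippedStep, smoothBump_of_one_le_abs hv, mul_zero, sub_zero]

end Profile

section Sine

open Real

lemma neg_one_zpow_mul_sin_pi_mul_nonneg {k : ℤ} {u : ℝ} (hu : u ∈ Icc (k : ℝ) (k + 1)) :
    0 ≤ (-1) ^ k * sin (π * u) := by
  have hsin : sin (π * u) = (-1) ^ k * sin (π * (u - k)) := by
    rw [← sin_add_int_mul_pi]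
    ring_nf
  rw [hsin, ← mul_assoc, ← mul_zpow, neg_one_mul, neg_neg, one_zpow, one_mul]
  exact sin_nonneg_of_nonneg_of_le_pi (mul_nonneg pi_pos.le (sub_nonneg.2 hu.1))
    (mul_le_of_le_one_right pi_pos.le (by linarith [hu.2]))

lemma two_mul_abs_sub_round_le_abs_sin (u : ℝ) : 2 * |u - round u| ≤ |sin (π * u)| := by
  have hsin : |sin (π * u)| = |sin (π * (u - round u))| := by
    rw [show π * u = π * (u - round u) + round u * π by ring, sin_add_int_mul_pi, abs_mul,
      abs_neg_one_zpow, one_mul]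
  have habs : |π * (u - round u)| = π * |u - round u| := by rw [abs_mul, abs_of_pos pi_pos]
  have hpi := pi_pos
  calc 2 * |u - round u| = 2 / π * |π * (u - round u)| := by rw [habs]; field_simp
    _ ≤ |sin (π * (u - round u))| := mul_abs_le_abs_sin (by
        rw [habs]
        nlinarith [abs_sub_round u])
    _ = |sin (π * u)| := hsin.symm

lemma dippedStep_sin_div_le (d : ℕ) {δ : ℝ} (hδ : 0 ≤ δ) {k : ℤ} {u : ℝ}
    (hu : u ∈ Icc (k : ℝ) (k + 1)) : dippedStep d (sin (π * u) / δ) ≤ (k % 2 : ℤ) := by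
  have hsign := neg_one_zpow_mul_sin_pi_mul_nonneg hu
  obtain hk | hk := k.even_or_odd
  · rw [hk.neg_one_zpow, one_mul] at hsign
    rw [Int.even_iff.1 hk, Int.cast_zero]
    exact dippedStep_nonpos d (div_nonneg hsign hδ)
  · rw [Int.odd_iff.1 hk, Int.cast_one]
    exact dippedStep_le_one d _

lemma dippedStep_sin_div_eq (d : ℕ) {δ : ℝ} (hδ : 0 ≤ δ) {k : ℤ} {u : ℝ}
    (hu : u ∈ Icc (k : ℝ) (k + 1)) (hsin : 1 ≤ |sin (π * u) / δ|) :
    dippedStep d (sin (π * u) / δ) = (k % 2 : ℤ) := by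
  have hsign := neg_one_zpow_mul_sin_pi_mul_nonneg hu
  rw [dippedStep_of_one_le_abs d hsin]
  obtain hk | hk := k.even_or_odd
  · rw [hk.neg_one_zpow, one_mul] at hsign
    rw [Int.even_iff.1 hk, Int.cast_zero, smoothStep_of_nonneg (div_nonneg hsign hδ)]
  · rw [hk.neg_one_zpow, neg_one_mul, neg_nonneg] at hsign
    rw [abs_of_nonpos (div_nonpos_of_nonpos_of_nonneg hsign hδ)] at hsin
    rw [Int.odd_iff.1 hk, Int.cast_one, smoothStep_of_le_neg_one (le_neg.1 hsin)]

lemma setOf_abs_sin_lt_inter_Icc_subset {k : ℕ} (hk : k ≠ 0) (δ : ℝ) :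
    {x | |sin (π * (k * x))| < δ} ∩ Icc 0 1 ⊆
      ⋃ j ∈ Finset.Icc (0 : ℤ) k, Metric.ball ((j : ℝ) / k) (δ / 2 / k) := by
  rintro x ⟨hx, hx0, hx1⟩
  have hk0 : (0 : ℝ) < k := by positivity
  have hround : |k * x - round (k * x)| < δ / 2 := by
    rw [lt_div_iff₀' two_pos]
    exact (two_mul_abs_sub_round_le_abs_sin _).trans_lt hx
  have hnonneg : 0 ≤ round (k * x) := by
    rw [round_eq]
    exact Int.floor_nonneg.2 (by positivity)
  have hle : round (k * x) ≤ k := by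
    rw [round_eq, ← Int.lt_add_one_iff, Int.floor_lt]
    push_cast
    nlinarith
  refine mem_iUnion₂.2 ⟨round (k * x), Finset.mem_Icc.2 ⟨hnonneg, hle⟩, ?_⟩
  have hdist : k * (x - round (k * x) / k) = k * x - round (k * x) := by field_simp
  rwa [Metric.mem_ball, dist_eq, lt_div_iff₀' hk0, ← abs_of_pos hk0, ← abs_mul, abs_of_pos hk0,
    hdist]

lemma volume_abs_sin_lt_le {k : ℕ} (hk : k ≠ 0) {δ : ℝ} (hδ : 0 ≤ δ) :
    volume ({x | |sin (π * (k * x))| < δ} ∩ Icc 0 1) ≤ ENNReal.ofReal (2 * δ) := by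
  have hk1 : (1 : ℝ) ≤ k := Nat.one_le_cast.2 (Nat.pos_of_ne_zero hk)
  calc volume ({x | |sin (π * (k * x))| < δ} ∩ Icc 0 1)
      ≤ ∑ j ∈ Finset.Icc (0 : ℤ) k, volume (Metric.ball ((j : ℝ) / k) (δ / 2 / k)) :=
        (measure_mono (setOf_abs_sin_lt_inter_Icc_subset hk δ)).trans
          (measure_biUnion_finset_le _ _)
    _ = ENNReal.ofReal ((k + 1) * (δ / k)) := by
        simp only [volume_ball, Finset.sum_const, Int.card_Icc, nsmul_eq_mul]
        rw [← ENNReal.ofReal_natCast, ← ENNReal.ofReal_mul (by positivity)]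
        congr 2
        · rw [sub_zero, ← Nat.cast_succ, Int.toNat_natCast, Nat.cast_succ]
        · ring
    _ ≤ ENNReal.ofReal (2 * δ) := by
        refine ENNReal.ofReal_le_ofReal ?_
        rw [← mul_div_assoc, div_le_iff₀ (by positivity)]
        nlinarith

end Sine

section ScaledSine

open Real

variable (ω δ : ℝ≥0)

lemma hasDerivAt_sin_mul_div (x : ℝ) :
    HasDerivAt (fun x => sin (ω * x) / δ) ((δ : ℝ)⁻¹ * ω * cos (ω * x)) x := by
  have h := ((hasDerivAt_id x).const_mul (ω : ℝ)).sin.div_const (δ : ℝ)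
  rwa [mul_one, div_eq_inv_mul, mul_comm (cos _), ← mul_assoc] at h

lemma norm_deriv_sin_mul_div_le (x : ℝ) :
    ‖deriv (fun x => sin (ω * x) / δ) x‖ ≤ (δ⁻¹ * ω : ℝ≥0) := by
  rw [(hasDerivAt_sin_mul_div ω δ x).deriv, norm_mul, norm_of_nonneg (by positivity)]
  exact mul_le_of_le_one_right (by positivity) (abs_cos_le_one _)

lemma lipschitzWith_deriv_sin_mul_div :
    LipschitzWith (δ⁻¹ * ω ^ 2) (deriv fun x => sin (ω * x) / δ) := by
  have hderiv : (deriv fun x => sin (ω * x) / δ) = fun x => (δ : ℝ)⁻¹ * ω * cos (ω * x) :=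
    funext fun x => (hasDerivAt_sin_mul_div ω δ x).deriv
  rw [hderiv]
  have h := (lipschitzWith_smul ((δ : ℝ)⁻¹ * ω)).comp
    (lipschitzWith_cos.comp (lipschitzWith_smul (ω : ℝ)))
  refine h.weaken (le_of_eq ?_)
  simp only [nnnorm_mul, nnnorm_inv, Real.nnnorm_of_nonneg, NNReal.coe_nonneg, one_mul]
  exact (mul_assoc _ _ _).trans (congrArg _ (pow_two ω).symm)

lemma differentiable_sin_mul_div : Differentiable ℝ fun x => sin (ω * x) / δ :=
  fun x => (hasDerivAt_sin_mul_div ω δ x).differentiableAt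

end ScaledSine

section Layer

open Real

/-- The width of `moat m` relative to the spacing of the dyadic points of level `m + 1`; summable,
so that almost every point avoids all but finitely many moats, and small enough in total for the
moats not to cover `[0, 1]`. -/
def moatWidth (m : ℕ) : ℝ≥0 := (16 * ((m : ℝ≥0) + 1) ^ 2)⁻¹

/-- A sine wave vanishing at the dyadic points of level `m + 1`, whose sign tells the binary digit
of index `m` of the argument. -/
def phase (m : ℕ) (x : ℝ) : ℝ := sin (π * (2 ^ (m + 1) * x)) / moatWidth m

/-- A thin neighbourhood of the dyadic points of level `m + 1`. -/
def moat (m : ℕ) : Set ℝ := {x | |phase m x| < 1}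

/-- A smoothing of `4⁻⁽ᵐ⁺¹⁾` times the binary digit of index `m`: the two agree off `moat m`, and
every dyadic point of level `m + 1` carries a dip of relative depth `m`. -/
def layer (m : ℕ) (x : ℝ) : ℝ := (4 ^ (m + 1))⁻¹ * dippedStep m (phase m x)

/-- The function of one variable from which the counterexample is built. -/
def potential (x : ℝ) : ℝ := ∑' m, layer m x

variable (m : ℕ)

lemma moatWidth_pos : 0 < moatWidth m := by
  unfold moatWidth
  positivity

lemma phase_eq_sin_mul_div :
    phase m = fun x => sin ((NNReal.pi * 2 ^ (m + 1) : ℝ≥0) * x) / moatWidth m := by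
  funext x
  simp only [phase, NNReal.coe_mul, NNReal.coe_real_pi, NNReal.coe_pow, NNReal.coe_ofNat, mul_assoc]

lemma differentiable_phase : Differentiable ℝ (phase m) := by
  rw [phase_eq_sin_mul_div]
  exact differentiable_sin_mul_div _ _

lemma norm_deriv_phase_le (x : ℝ) :
    ‖deriv (phase m) x‖ ≤ ((moatWidth m)⁻¹ * (NNReal.pi * 2 ^ (m + 1)) : ℝ≥0) := by
  rw [phase_eq_sin_mul_div]
  exact norm_deriv_sin_mul_div_le _ _ x

lemma lipschitzWith_deriv_phase :
    LipschitzWith ((moatWidth m)⁻¹ * (NNReal.pi * 2 ^ (m + 1)) ^ 2) (deriv (phase m)) := by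
  rw [phase_eq_sin_mul_div]
  exact lipschitzWith_deriv_sin_mul_div _ _

lemma differentiable_layer : Differentiable ℝ (layer m) :=
  ((differentiable_dippedStep m).comp (differentiable_phase m)).const_mul _

lemma deriv_layer :
    deriv (layer m) = fun x => (4 ^ (m + 1))⁻¹ * deriv (fun x => dippedStep m (phase m x)) x :=
  funext fun _ => deriv_const_mul_field _

lemma nnnorm_inv_four_pow : ‖((4 : ℝ) ^ m)⁻¹‖₊ = (2 ^ m * 2 ^ m)⁻¹ := by
  rw [nnnorm_inv, nnnorm_pow, Real.nnnorm_ofNat, ← mul_pow]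
  norm_num

section Bounds

variable {m} {B : ℝ≥0} (hB : ∀ v, ‖deriv (dippedStep m) v‖ ≤ (B * (m + 1) : ℝ≥0))
include hB

lemma norm_deriv_layer_le (x : ℝ) :
    ‖deriv (layer m) x‖ ≤ (16 * NNReal.pi * B * ((m + 1) ^ 3 * (1 / 2) ^ (m + 1)) : ℝ≥0) := by
  rw [deriv_layer, norm_mul, ← coe_nnnorm, nnnorm_inv_four_pow]
  calc _ ≤ _ * ((B * (m + 1) * ((moatWidth m)⁻¹ * (NNReal.pi * 2 ^ (m + 1))) : ℝ≥0) : ℝ) := by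
        gcongr
        exact norm_deriv_comp_le (differentiable_dippedStep m) (differentiable_phase m) hB
          (norm_deriv_phase_le m) x
    _ = _ := by
        rw [← NNReal.coe_mul, moatWidth, one_div, inv_pow, NNReal.coe_inj]
        field_simp

lemma lipschitzWith_deriv_layer (hL : LipschitzWith (B * (m + 1)) (deriv (dippedStep m))) :
    LipschitzWith (272 * NNReal.pi ^ 2 * B * (m + 1) ^ 5) (deriv (layer m)) := by
  rw [deriv_layer]
  refine ((lipschitzWith_smul ((4 ^ (m + 1))⁻¹ : ℝ)).comp
    (lipschitzWith_deriv_comp (differentiable_dippedStep m) (differentiable_phase m) hB hL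
      (norm_deriv_phase_le m) (lipschitzWith_deriv_phase m))).weaken ?_
  have hm1 : (1 : ℝ≥0) ≤ m + 1 := le_add_self
  rw [nnnorm_inv_four_pow, moatWidth]
  calc _ = 256 * NNReal.pi ^ 2 * B * (m + 1) ^ 5 + 16 * NNReal.pi ^ 2 * B * (m + 1) ^ 3 := by
        field_simp
        ring
    _ ≤ 256 * NNReal.pi ^ 2 * B * (m + 1) ^ 5 + 16 * NNReal.pi ^ 2 * B * (m + 1) ^ 5 := by
        gcongr
        norm_num
    _ = _ := by ring

end Bounds

lemma exists_deriv_layer_bounds : ∃ K : ℝ≥0, ∀ m : ℕ,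
    (∀ x, ‖deriv (layer m) x‖ ≤ (K * ((m + 1) ^ 5 * (1 / 2) ^ (m + 1)) : ℝ≥0)) ∧
      LipschitzWith (K * (m + 1) ^ 5) (deriv (layer m)) := by
  obtain ⟨B, hB⟩ := exists_deriv_dippedStep_bounds
  refine ⟨272 * NNReal.pi ^ 2 * B, fun m => ⟨fun x => ?_,
    lipschitzWith_deriv_layer (hB m).1 (hB m).2⟩⟩
  refine (norm_deriv_layer_le (hB m).1 x).trans (NNReal.coe_le_coe.2 ?_)
  have hpi : 1 ≤ NNReal.pi := NNReal.coe_le_coe.1 (by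
    rw [NNReal.coe_one, NNReal.coe_real_pi]
    linarith [pi_gt_three])
  have hm1 : (1 : ℝ≥0) ≤ m + 1 := le_add_self
  gcongr
  · norm_num
  · exact le_self_pow₀ hpi two_ne_zero
  · norm_num

variable {m} in
lemma deriv_layer_of_notMem_moat {x : ℝ} (hx : x ∉ moat m) : deriv (layer m) x = 0 := by
  simp only [deriv_layer, deriv_fun_comp (differentiable_dippedStep m) (differentiable_phase m),
    deriv_dippedStep_of_one_le_abs m (not_lt.1 hx), zero_mul, mul_zero]

lemma abs_layer_le (x : ℝ) : |layer m x| ≤ ((m : ℝ) + 1) ^ 1 * (1 / 4) ^ (m + 1) := by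
  rw [layer, abs_mul, abs_of_pos (by positivity), mul_comm, pow_one, one_div, inv_pow]
  gcongr
  exact abs_dippedStep_le _ _

lemma summable_layer (x : ℝ) : Summable fun m => layer m x :=
  .of_norm_bounded (summable_succ_pow_mul_geometric 1 (by norm_num)) fun m => abs_layer_le m x

lemma summable_succ_pow_five_mul_geometric (K : ℝ≥0) {r : ℝ≥0} (hr : r < 1) :
    Summable fun m : ℕ => K * (((m : ℝ≥0) + 1) ^ 5 * r ^ (m + 1)) := by
  refine Summable.mul_left K (NNReal.summable_coe.1 ?_)
  push_cast
  exact summable_succ_pow_mul_geometric 5 (by simpa using hr)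

lemma hasDerivAt_potential (x : ℝ) : HasDerivAt potential (∑' m, deriv (layer m) x) x := by
  obtain ⟨K, hK⟩ := exists_deriv_layer_bounds
  exact hasDerivAt_tsum
    (NNReal.summable_coe.2 (summable_succ_pow_five_mul_geometric K (r := 1 / 2) (by norm_num)))
    (fun m y => (differentiable_layer m y).hasDerivAt) (fun m => (hK m).1) (summable_layer x) x

lemma summable_deriv_layer (x : ℝ) : Summable fun m => deriv (layer m) x := by
  obtain ⟨K, hK⟩ := exists_deriv_layer_bounds
  exact .of_norm_bounded
    (NNReal.summable_coe.2 (summable_succ_pow_five_mul_geometric K (r := 1 / 2) (by norm_num)))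
    fun m => (hK m).1 x

lemma exists_holderWith_deriv_potential {α : ℝ≥0} (hα : α < 1) :
    ∃ C, HolderWith C α (deriv potential) := by
  obtain ⟨K, hK⟩ := exists_deriv_layer_bounds
  have hα0 : 0 < 1 - (α : ℝ) := sub_pos.2 hα
  have hconst (m : ℕ) : (2 * (K * (((m : ℝ≥0) + 1) ^ 5 * (1 / 2) ^ (m + 1)))) ^ (1 - α : ℝ) *
      (K * (m + 1) ^ 5) ^ (α : ℝ) =
      2 ^ (1 - α : ℝ) * K * ((m + 1) ^ 5 * ((1 / 2) ^ (1 - α : ℝ)) ^ (m + 1)) := by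
    calc _ = 2 ^ (1 - α : ℝ) * ((K * (m + 1) ^ 5) ^ (1 - α : ℝ) * (K * (m + 1) ^ 5) ^ (α : ℝ)) *
          ((1 / 2) ^ (m + 1)) ^ (1 - α : ℝ) := by
          simp only [NNReal.mul_rpow]
          ring
      _ = _ := by
          rw [← NNReal.rpow_add_of_nonneg _ hα0.le α.coe_nonneg, sub_add_cancel, NNReal.rpow_one,
            ← NNReal.rpow_natCast (1 / 2), ← NNReal.rpow_mul, mul_comm ((m + 1 : ℕ) : ℝ),
            NNReal.rpow_mul, NNReal.rpow_natCast]
          ring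
  have hderiv : deriv potential = fun x => ∑' m, deriv (layer m) x :=
    funext fun x => (hasDerivAt_potential x).deriv
  rw [hderiv]
  refine ⟨_, holderWith_tsum
    (fun m => holderWith_of_norm_le_of_lipschitzWith (hK m).1 (hK m).2 hα.le) ?_
    summable_deriv_layer⟩
  simp only [hconst]
  exact summable_succ_pow_five_mul_geometric _ (NNReal.rpow_lt_one (by norm_num) hα0)

lemma deriv_potential_of_forall_notMem_moat {x : ℝ} (hx : ∀ m, x ∉ moat m) :
    deriv potential x = 0 := by
  simp only [(hasDerivAt_potential x).deriv, fun m => deriv_layer_of_notMem_moat (hx m), tsum_zero]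

end Layer

section DyadicCell

variable {m n : ℕ} {x y : ℝ}

/-- The dyadic interval of length `2⁻ⁿ` containing `x`, with both endpoints included. -/
def dyadicCell (n : ℕ) (x : ℝ) : Set ℝ := Icc (⌊2 ^ n * x⌋ / 2 ^ n) ((⌊2 ^ n * x⌋ + 1) / 2 ^ n)

lemma mem_dyadicCell_iff :
    y ∈ dyadicCell n x ↔ 2 ^ n * y ∈ Icc (⌊2 ^ n * x⌋ : ℝ) (⌊2 ^ n * x⌋ + 1) := by
  rw [dyadicCell, mem_Icc, mem_Icc, div_le_iff₀' (by positivity), le_div_iff₀' (by positivity)]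

lemma mem_dyadicCell_self (n : ℕ) (x : ℝ) : x ∈ dyadicCell n x :=
  mem_dyadicCell_iff.2 ⟨Int.floor_le _, (Int.lt_floor_add_one _).le⟩

lemma dyadicCell_subset_dyadicCell (hmn : m ≤ n) (x : ℝ) : dyadicCell n x ⊆ dyadicCell m x := by
  intro y hy
  have hpow : (2 : ℝ) ^ n = 2 ^ (n - m) * 2 ^ m := by rw [← pow_add, Nat.sub_add_cancel hmn]
  have hlower : 2 ^ (n - m) * ⌊2 ^ m * x⌋ ≤ ⌊2 ^ n * x⌋ := by
    rw [Int.le_floor]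
    push_cast
    rw [hpow, mul_assoc]
    gcongr
    exact Int.floor_le _
  have hupper : ⌊2 ^ n * x⌋ + 1 ≤ 2 ^ (n - m) * (⌊2 ^ m * x⌋ + 1) := by
    rw [Int.add_one_le_iff, Int.floor_lt]
    push_cast
    rw [hpow, mul_assoc]
    gcongr
    exact Int.lt_floor_add_one _
  obtain ⟨hy₁, hy₂⟩ := mem_dyadicCell_iff.1 hy
  have hpos : (0 : ℝ) < 2 ^ (n - m) := by positivity
  have hmul : 2 ^ n * y = 2 ^ (n - m) * (2 ^ m * y) := by rw [hpow, mul_assoc]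
  refine mem_dyadicCell_iff.2 ⟨le_of_mul_le_mul_left ?_ hpos, le_of_mul_le_mul_left ?_ hpos⟩
  · rw [← hmul]
    exact le_trans (by exact_mod_cast hlower) hy₁
  · rw [← hmul]
    exact hy₂.trans (by exact_mod_cast hupper)

lemma abs_sub_le_of_mem_dyadicCell (hy : y ∈ dyadicCell n x) : |y - x| ≤ (2 ^ n)⁻¹ := by
  have h := abs_sub_le_of_le_of_le hy.1 hy.2 (mem_dyadicCell_self n x).1 (mem_dyadicCell_self n x).2
  rwa [← sub_div, add_sub_cancel_left, one_div] at h

lemma frontier_dyadicCell (n : ℕ) (x : ℝ) :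
    frontier (dyadicCell n x) = {⌊2 ^ n * x⌋ / (2 : ℝ) ^ n, (⌊2 ^ n * x⌋ + 1) / (2 : ℝ) ^ n} :=
  frontier_Icc (div_le_div_of_nonneg_right (le_add_of_nonneg_right zero_le_one) (by positivity))

lemma exists_int_eq_of_mem_frontier_dyadicCell (hy : y ∈ frontier (dyadicCell n x)) :
    ∃ k : ℤ, 2 ^ n * y = k := by
  rw [frontier_dyadicCell] at hy
  obtain rfl | rfl := hy
  · exact ⟨⌊2 ^ n * x⌋, mul_div_cancel₀ _ (by positivity)⟩
  · exact ⟨⌊2 ^ n * x⌋ + 1, by rw [mul_div_cancel₀ _ (by positivity)]; push_cast; rfl⟩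

end DyadicCell

section LayerOnCells

open Real

variable {m n N : ℕ} {x y : ℝ}

lemma phase_eq_zero {k : ℤ} (hnm : n ≤ m + 1) (hy : 2 ^ n * y = k) : phase m y = 0 := by
  have hpow : π * (2 ^ (m + 1) * y) = (2 ^ (m + 1 - n) * k : ℤ) * π := by
    push_cast
    rw [← hy, ← mul_assoc (2 ^ (m + 1 - n)), ← pow_add, Nat.sub_add_cancel hnm, mul_comm]
  rw [phase, hpow, sin_int_mul_pi, zero_div]

lemma mem_interior_dyadicCell (hx : x ∉ moat n) : x ∈ interior (dyadicCell n x) := by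
  by_contra hint
  obtain ⟨k, hk⟩ := exists_int_eq_of_mem_frontier_dyadicCell
    ⟨subset_closure (mem_dyadicCell_self n x), hint⟩
  refine hx ?_
  rw [moat, mem_ofPred_eq, phase_eq_zero n.le_succ hk, abs_zero]
  exact one_pos

lemma layer_le (m : ℕ) (x : ℝ) : layer m x ≤ 1 * (1 / 4) ^ (m + 1) := by
  rw [layer, mul_comm, one_div, inv_pow]
  gcongr
  exact dippedStep_le_one _ _

lemma layer_eq_of_mul_eq_int {k : ℤ} (hnm : n ≤ m + 1) (hy : 2 ^ n * y = k) :
    layer m y = -m * (1 / 4) ^ (m + 1) := by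
  rw [layer, phase_eq_zero hnm hy, dippedStep_zero, mul_comm, one_div, inv_pow]

lemma layer_eq_floor_emod (hx : x ∉ moat m) :
    layer m x = (4 ^ (m + 1))⁻¹ * (⌊2 ^ (m + 1) * x⌋ % 2 : ℤ) := by
  rw [layer, phase, dippedStep_sin_div_eq m (moatWidth m).coe_nonneg
    (mem_dyadicCell_iff.1 (mem_dyadicCell_self (m + 1) x)) (not_lt.1 hx)]

lemma layer_nonneg (hx : x ∉ moat m) : 0 ≤ layer m x := by
  rw [layer_eq_floor_emod hx]
  have : 0 ≤ ⌊2 ^ (m + 1) * x⌋ % 2 := Int.emod_nonneg _ two_ne_zero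
  positivity

lemma layer_le_layer_of_mem_dyadicCell (hx : x ∉ moat m) (hy : y ∈ dyadicCell (m + 1) x) :
    layer m y ≤ layer m x := by
  rw [layer_eq_floor_emod hx, layer]
  gcongr
  exact dippedStep_sin_div_le m (moatWidth m).coe_nonneg (mem_dyadicCell_iff.1 hy)

lemma hasSum_const_mul_pow_add (c : ℝ) (n : ℕ) :
    HasSum (fun m : ℕ => c * (1 / 4 : ℝ) ^ (m + n + 1)) (c / 3 * (1 / 4) ^ n) := by
  have h := (hasSum_geometric_of_lt_one (r := (1 / 4 : ℝ)) (by norm_num) (by norm_num)).mul_left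
    (c * (1 / 4) ^ (n + 1))
  rw [show c * (1 / 4 : ℝ) ^ (n + 1) * (1 - 1 / 4)⁻¹ = c / 3 * (1 / 4) ^ n by ring] at h
  exact h.congr_fun fun m => by ring

-- The finitely many layers whose moat contains `x` are controlled by Taylor's formula, the other
-- ones of index less than `n` are maximal at `x`.
lemma exists_potential_le_of_layer_le (hN : ∀ m ≥ N, x ∉ moat m) (hx : deriv potential x = 0) :
    ∃ B : ℝ, ∀ n ≥ N, ∀ y ∈ dyadicCell n x, ∀ c : ℝ,
      (∀ m ≥ n, layer m y ≤ c * (1 / 4) ^ (m + 1)) →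
        potential y ≤ potential x + (B + c / 3) * (1 / 4) ^ n := by
  obtain ⟨K, hK⟩ := exists_deriv_layer_bounds
  refine ⟨∑ m ∈ Finset.range N, (K * (m + 1) ^ 5 : ℝ≥0), fun n hn y hy c hc => ?_⟩
  set t : ℕ → ℝ := fun m => layer m y - layer m x - deriv (layer m) x * (y - x)
  have ht : HasSum t (potential y - potential x) := by
    have h := ((summable_layer y).hasSum.sub (summable_layer x).hasSum).sub
      ((summable_deriv_layer x).hasSum.mul_right (y - x))
    rwa [← (hasDerivAt_potential x).deriv, hx, zero_mul, sub_zero] at h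
  have ht_of_ge (m) (hm : m ≥ N) : t m = layer m y - layer m x := by
    simp only [t, deriv_layer_of_notMem_moat (hN m hm), zero_mul, sub_zero]
  have hsq : (y - x) ^ 2 ≤ (1 / 4 : ℝ) ^ n := by
    have h := pow_le_pow_left₀ (abs_nonneg _) (abs_sub_le_of_mem_dyadicCell hy) 2
    rw [sq_abs, ← inv_pow, ← pow_mul, mul_comm, pow_mul] at h
    exact h.trans_eq (by norm_num)
  have hsmall : ∑ m ∈ Finset.range N, t m ≤
      (∑ m ∈ Finset.range N, (K * (m + 1) ^ 5 : ℝ≥0) : ℝ) * (1 / 4) ^ n := by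
    rw [Finset.sum_mul]
    refine Finset.sum_le_sum fun m _ => (le_abs_self _).trans ?_
    exact (abs_sub_sub_deriv_mul_le (differentiable_layer m) (hK m).2 x y).trans (by gcongr)
  have hmiddle : ∑ m ∈ Finset.Ico N n, t m ≤ 0 := Finset.sum_nonpos fun m hm => by
    obtain ⟨hNm, hmn⟩ := Finset.mem_Ico.1 hm
    rw [ht_of_ge m hNm, sub_nonpos]
    exact layer_le_layer_of_mem_dyadicCell (hN m hNm) (dyadicCell_subset_dyadicCell hmn x hy)
  have htail : ∑' m, t (m + n) ≤ c / 3 * (1 / 4) ^ n := by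
    refine hasSum_le (fun m => ?_) ((summable_nat_add_iff n).2 ht.summable).hasSum
      (hasSum_const_mul_pow_add c n)
    have hm : m + n ≥ n := Nat.le_add_left n m
    rw [ht_of_ge _ (hn.trans hm)]
    linarith [hc _ hm, layer_nonneg (hN _ (hn.trans hm))]
  have hsplit := ht.summable.sum_add_tsum_nat_add n
  rw [ht.tsum_eq, ← Finset.sum_range_add_sum_Ico _ hn] at hsplit
  linarith

lemma exists_potential_le_of_mem_dyadicCell (hN : ∀ m ≥ N, x ∉ moat m)
    (hx : deriv potential x = 0) : ∃ B : ℝ, ∀ n ≥ N, ∀ y ∈ dyadicCell n x,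
      potential y ≤ potential x + B * (1 / 4) ^ n ∧
      (y ∈ frontier (dyadicCell n x) → potential y ≤ potential x + (B - n / 3) * (1 / 4) ^ n) := by
  obtain ⟨B, hB⟩ := exists_potential_le_of_layer_le hN hx
  refine ⟨B + 1 / 3, fun n hn y hy => ⟨hB n hn y hy 1 fun m _ => layer_le m y, fun hfr => ?_⟩⟩
  obtain ⟨k, hk⟩ := exists_int_eq_of_mem_frontier_dyadicCell hfr
  refine (hB n hn y hy (-n) fun m hm => ?_).trans ?_
  · rw [layer_eq_of_mul_eq_int (hm.trans m.le_succ) hk]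
    gcongr
  · gcongr
    linarith

end LayerOnCells

section Box

variable {ι : Type*} [Finite ι] {s : ι → Set ℝ}

lemma interior_setOf_forall_apply_mem (s : ι → Set ℝ) :
    interior {q : EuclideanSpace ℝ ι | ∀ i, q i ∈ s i} = {q | ∀ i, q i ∈ interior (s i)} := by
  have hbox (t : ι → Set ℝ) : {q : EuclideanSpace ℝ ι | ∀ i, q i ∈ t i} =
      PiLp.homeomorph 2 (fun _ : ι => ℝ) ⁻¹' univ.pi t := by
    ext q
    exact mem_univ_pi.symm
  rw [hbox, hbox, ← Homeomorph.preimage_interior, interior_pi_set finite_univ]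

lemma exists_apply_mem_frontier (hs : ∀ i, IsClosed (s i)) {q : EuclideanSpace ℝ ι}
    (hq : q ∈ frontier {q : EuclideanSpace ℝ ι | ∀ i, q i ∈ s i}) :
    (∀ i, q i ∈ s i) ∧ ∃ i, q i ∈ frontier (s i) := by
  have hclosed : IsClosed {q : EuclideanSpace ℝ ι | ∀ i, q i ∈ s i} := by
    simp only [ofPred_forall]
    exact isClosed_iInter fun i => (hs i).preimage (PiLp.continuous_apply 2 _ i)
  rw [hclosed.frontier_eq, interior_setOf_forall_apply_mem] at hq
  obtain ⟨hmem, hint⟩ := hq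
  obtain ⟨i, hi⟩ := not_forall.1 hint
  exact ⟨hmem, i, subset_closure (hmem i), hi⟩

end Box

section LevelSets

variable {ι : Type*} [Fintype ι]

lemma sum_mul_lt_sum_mul {w a b c : ι → ℝ} {d ε : ℝ} (hw : ∀ k, 0 ≤ w k) (hε : 0 < ε)
    (hle : ∀ k, a k ≤ b k + c k * ε) {i : ι} (hi : a i ≤ b i + (c i - d) * ε)
    (hd : ∑ k, w k * c k < w i * d) : ∑ k, w k * a k < ∑ k, w k * b k := by
  have hgap : w i * d * ε ≤ ∑ k, w k * b k + (∑ k, w k * c k) * ε - ∑ k, w k * a k := by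
    calc w i * d * ε = w i * (d * ε) := mul_assoc _ _ _
      _ ≤ w i * (b i + c i * ε - a i) := by
          gcongr
          · exact hw i
          · linarith
      _ ≤ ∑ k, w k * (b k + c k * ε - a k) :=
          Finset.single_le_sum (f := fun k => w k * (b k + c k * ε - a k))
            (fun k _ => mul_nonneg (hw k) (sub_nonneg.2 (hle k))) (Finset.mem_univ i)
      _ = _ := by
          simp only [mul_sub, mul_add, Finset.sum_sub_distrib, Finset.sum_add_distrib, ← mul_assoc,
            ← Finset.sum_mul]
  linarith [mul_lt_mul_of_pos_right hd hε]

lemma connectedComponentIn_sum_potential_subset_singleton {w : ι → ℝ} (hw : ∀ i, 0 < w i)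
    {p : EuclideanSpace ℝ ι} (hp : ∀ i, deriv potential (p i) = 0)
    (hmoat : ∀ i, ∃ N, ∀ m ≥ N, p i ∉ moat m) {S : Set (EuclideanSpace ℝ ι)}
    (hS : ∀ q ∈ S, ∑ i, w i * potential (q i) = ∑ i, w i * potential (p i)) :
    connectedComponentIn S p ⊆ {p} := by
  choose N hN using hmoat
  choose B hB using fun i => exists_potential_le_of_mem_dyadicCell (hN i) (hp i)
  refine connectedComponentIn_subset_singleton fun q _ hqp => ?_
  obtain ⟨j, hj⟩ : ∃ j, q j ≠ p j := not_forall.1 fun h => hqp (PiLp.ext h)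
  have hlarge : ∀ᶠ n : ℕ in Filter.atTop, ∀ i, N i ≤ n ∧ ∑ k, w k * B k < w i * (n / 3) :=
    Filter.eventually_all.2 fun i => (Filter.eventually_ge_atTop _).and <|
      ((tendsto_natCast_atTop_atTop.atTop_div_const three_pos).const_mul_atTop
        (hw i)).eventually_gt_atTop _
  have hfine : ∀ᶠ n : ℕ in Filter.atTop, ((2 : ℝ) ^ n)⁻¹ < |q j - p j| := by
    simp only [← inv_pow]
    exact (tendsto_pow_atTop_nhds_zero_of_lt_one (by norm_num) (by norm_num)).eventually_lt_const
      (abs_pos.2 (sub_ne_zero.2 hj))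
  obtain ⟨n, hn, hnj⟩ := (hlarge.and hfine).exists
  refine ⟨{q | ∀ i, q i ∈ dyadicCell n (p i)}, ?_, fun hq => ?_, ?_⟩
  · rw [interior_setOf_forall_apply_mem]
    exact fun i => mem_interior_dyadicCell (hN i n (hn i).1)
  · exact hnj.not_ge (abs_sub_le_of_mem_dyadicCell (hq j))
  · rw [Set.disjoint_left]
    intro r hr hrS
    obtain ⟨hcell, i, hi⟩ := exists_apply_mem_frontier (fun _ => isClosed_Icc) hr
    refine (hS r hrS).not_lt ?_
    exact sum_mul_lt_sum_mul (fun k => (hw k).le) (by positivity)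
      (fun k => (hB k n (hn k).1 (r k) (hcell k)).1)
      ((hB i n (hn i).1 (r i) (hcell i)).2 hi) (hn i).2

end LevelSets

section MoatMeasure

lemma isOpen_moat (m : ℕ) : IsOpen (moat m) :=
  isOpen_lt (differentiable_phase m).continuous.abs continuous_const

lemma volume_moat_inter_Icc_le (m : ℕ) :
    volume (moat m ∩ Icc 0 1) ≤ ENNReal.ofReal (2 * moatWidth m) := by
  have hmoat : moat m = {x | |Real.sin (Real.pi * ((2 ^ (m + 1) : ℕ) * x))| < moatWidth m} := by
    ext x
    have hw : (0 : ℝ) < moatWidth m := moatWidth_pos m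
    simp only [moat, phase, mem_ofPred_eq, abs_div, abs_of_pos hw, div_lt_one hw, Nat.cast_pow,
      Nat.cast_ofNat]
  rw [hmoat]
  exact volume_abs_sin_lt_le (by positivity) (moatWidth m).coe_nonneg

lemma hasSum_two_mul_moatWidth :
    HasSum (fun m => 2 * (moatWidth m : ℝ)) (2 * (Real.pi ^ 2 / 6 / 16)) := by
  have h := (((hasSum_nat_add_iff' 1).2 hasSum_zeta_two).div_const 16).mul_left 2
  simp only [Finset.range_one, Finset.sum_singleton, Nat.cast_zero, ne_eq, OfNat.ofNat_ne_zero,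
    not_false_eq_true, zero_pow, div_zero, sub_zero] at h
  refine h.congr_fun fun m => ?_
  simp only [moatWidth, NNReal.coe_inv, NNReal.coe_mul, NNReal.coe_pow, NNReal.coe_add,
    NNReal.coe_natCast, NNReal.coe_ofNat, NNReal.coe_one, Nat.cast_add, Nat.cast_one]
  field_simp

lemma tsum_volume_moat_inter_Icc_lt_one : ∑' m, volume (moat m ∩ Icc 0 1) < 1 := by
  refine (ENNReal.tsum_le_tsum volume_moat_inter_Icc_le).trans_lt ?_
  rw [← ENNReal.ofReal_tsum_of_nonneg (fun m => by positivity) hasSum_two_mul_moatWidth.summable,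
    hasSum_two_mul_moatWidth.tsum_eq, ENNReal.ofReal_lt_one]
  nlinarith [Real.pi_lt_four, Real.pi_pos]

lemma volume_setOf_frequently_mem_moat :
    volume {x | ∃ᶠ m in Filter.atTop, x ∈ moat m ∩ Icc 0 1} = 0 :=
  measure_setOfPred_frequently_eq_zero tsum_volume_moat_inter_Icc_lt_one.ne_top

/-- The points of `[0, 1]` lying in no moat: a fat Cantor set, on which `potential` equals the sum
of `4⁻⁽ᵐ⁺¹⁾` times the binary digit of index `m`. -/
def moatFreeSet : Set ℝ := Icc 0 1 \ ⋃ m, moat m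

lemma notMem_moat_of_mem_moatFreeSet {x : ℝ} (hx : x ∈ moatFreeSet) (m : ℕ) : x ∉ moat m :=
  fun h => hx.2 (mem_iUnion_of_mem m h)

lemma measurableSet_moatFreeSet : MeasurableSet moatFreeSet :=
  measurableSet_Icc.diff (.iUnion fun m => (isOpen_moat m).measurableSet)

lemma moatFreeSet_subset_Ico : moatFreeSet ⊆ Ico 0 1 := by
  intro x hx
  refine ⟨hx.1.1, hx.1.2.lt_of_ne ?_⟩
  rintro rfl
  refine notMem_moat_of_mem_moatFreeSet hx 0 ?_
  rw [moat, mem_ofPred_eq, phase_eq_zero (n := 0) (k := 1) (Nat.zero_le _) (by simp), abs_zero]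
  exact zero_lt_one

lemma volume_moatFreeSet_pos : 0 < volume moatFreeSet := by
  have hsub : volume ((⋃ m, moat m) ∩ Icc (0 : ℝ) 1) < volume (Icc (0 : ℝ) 1) := by
    rw [iUnion_inter, Real.volume_Icc, sub_zero, ENNReal.ofReal_one]
    exact (measure_iUnion_le _).trans_lt tsum_volume_moat_inter_Icc_lt_one
  refine (tsub_pos_of_lt hsub).trans_le (le_measure_sdiff.trans_eq ?_)
  rw [sdiff_inter_self_eq_sdiff, moatFreeSet]

end MoatMeasure

section Interleaving

/-- The base-`4` digits obtained by interleaving the binary digits of two coordinates. -/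
def interleavedDigits (p : EuclideanSpace ℝ (Fin 2)) (m : ℕ) : Fin (2 ^ 2) :=
  finFunctionFinEquiv fun i => Real.digits (p i) 2 m

lemma interleavedDigits_eq_iff {p q : EuclideanSpace ℝ (Fin 2)} {m : ℕ} :
    interleavedDigits p m = interleavedDigits q m ↔
      ∀ i, Real.digits (p i) 2 m = Real.digits (q i) 2 m := by
  rw [interleavedDigits, interleavedDigits, finFunctionFinEquiv.apply_eq_iff_eq, funext_iff]

lemma abs_sub_le_of_digits_eq {x y : ℝ} (hx : x ∈ Ico 0 1) (hy : y ∈ Ico 0 1) {b n : ℕ} [NeZero b]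
    (hb : 1 < b) (h : ∀ i < n, Real.digits x b i = Real.digits y b i) :
    |x - y| ≤ ((b : ℝ) ^ n)⁻¹ := by
  conv_lhs => rw [← Real.ofDigits_digits hb hx, ← Real.ofDigits_digits hb hy]
  exact Real.abs_ofDigits_sub_ofDigits_le h

lemma volume_setOf_interleavedDigits_eq_le {K : Set (EuclideanSpace ℝ (Fin 2))}
    (hK : ∀ p ∈ K, ∀ i, p i ∈ Ico 0 1) (n : ℕ) (w : ℕ → Fin (2 ^ 2)) :
    volume ({p | ∀ i < n, interleavedDigits p i = w i} ∩ K) ≤ 4 * (((2 ^ 2 : ℕ) : ℝ≥0∞) ^ n)⁻¹ := by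
  obtain hempty | ⟨q, hqw, hqK⟩ :=
    ({p | ∀ i < n, interleavedDigits p i = w i} ∩ K).eq_empty_or_nonempty
  · simp only [hempty, measure_empty, zero_le]
  have hsub : {p | ∀ i < n, interleavedDigits p i = w i} ∩ K ⊆
      {p | ∀ i, p i ∈ Metric.closedBall (q i) ((2 : ℕ) ^ n)⁻¹} := by
    rintro p ⟨hpw, hpK⟩ i
    refine abs_sub_le_of_digits_eq (hK p hpK i) (hK q hqK i) one_lt_two fun m hm => ?_
    exact interleavedDigits_eq_iff.1 ((hpw m hm).trans (hqw m hm).symm) i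
  refine (measure_mono hsub).trans_eq ?_
  simp only [volume_setOf_forall_apply_mem, Real.volume_closedBall, Fin.prod_univ_two]
  rw [← sq, ← ENNReal.ofReal_pow (by positivity), mul_pow, ENNReal.ofReal_mul (by norm_num),
    inv_pow, ENNReal.ofReal_inv_of_pos (by positivity)]
  norm_num [pow_right_comm _ n 2]

lemma layer_eq_digit {x : ℝ} (hx0 : 0 ≤ x) {m : ℕ} (hx : x ∉ moat m) :
    layer m x = Real.digits x 2 m * (4 ^ (m + 1))⁻¹ := by
  have hfloor : (⌊x * 2 ^ (m + 1)⌋₊ : ℤ) = ⌊x * 2 ^ (m + 1)⌋ :=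
    Int.natCast_floor_eq_floor (by positivity)
  rw [layer_eq_floor_emod hx, mul_comm (_⁻¹), mul_comm (2 ^ _) x, ← hfloor, Real.digits]
  norm_cast

end Interleaving

section Counterexample

/-- The function of class `C^{1,α}` for all `α < 1` having the weak, but not the relaxed, Sard
property. The weights `1` and `2` make the digits of the two coordinates add up to a base-`4`
digit. -/
def weightedPotential (p : EuclideanSpace ℝ (Fin 2)) : ℝ :=
  ∑ i : Fin 2, 2 ^ (i : ℕ) * potential (p i)

lemma hasDerivAt_const_mul_potential (c t : ℝ) :
    HasDerivAt (fun t => c * potential t) (c * deriv potential t) t :=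
  (hasDerivAt_potential t).differentiableAt.hasDerivAt.const_mul c

lemma isC1Holder_weightedPotential {α : ℝ≥0} (h0 : 0 < α) (h1 : α < 1) :
    IsC1Holder weightedPotential α := by
  obtain ⟨C, hC⟩ := exists_holderWith_deriv_potential h1
  exact isC1Holder_sum_apply h0 (fun _ => hasDerivAt_const_mul_potential _) fun i =>
    hC.smul ((2 : ℝ) ^ (i : ℕ))

lemma mem_critSet_weightedPotential_iff {p : EuclideanSpace ℝ (Fin 2)} :
    p ∈ critSet weightedPotential ↔ p ∈ unitSquare ∧ ∀ i, deriv potential (p i) = 0 := by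
  refine (mem_critSet_sum_apply_iff fun i =>
    hasDerivAt_const_mul_potential (2 ^ (i : ℕ))).trans ?_
  simp only [mul_eq_zero, pow_eq_zero_iff', OfNat.ofNat_ne_zero, false_and, false_or]

lemma measurable_weightedPotential : Measurable weightedPotential :=
  (Differentiable.continuous fun p => (hasFDerivAt_sum_apply
    (fun i : Fin 2 => hasDerivAt_const_mul_potential (2 ^ (i : ℕ))) p).differentiableAt).measurable

lemma notMem_Estar_weightedPotential {p : EuclideanSpace ℝ (Fin 2)}
    (hp : p ∈ critSet weightedPotential) (hmoat : ∀ i, ∃ N, ∀ m ≥ N, p i ∉ moat m) :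
    p ∉ Estar weightedPotential := by
  have hcomp : connectedComponentIn (unitSquare ∩ weightedPotential ⁻¹' {weightedPotential p}) p ⊆
      {p} :=
    connectedComponentIn_sum_potential_subset_singleton (fun i => by positivity)
      (mem_critSet_weightedPotential_iff.1 hp).2 hmoat fun q hq => hq.2
  have : NullSingletonClass (μH[1] : Measure (EuclideanSpace ℝ (Fin 2))) :=
    Measure.nullSingletonClass_hausdorff _ one_pos
  rw [Estar, mem_ofPred_eq, not_lt, nonpos_iff_eq_zero]
  exact (subsingleton_singleton.anti hcomp).measure_zero _

lemma volume_critSet_inter_Estar_weightedPotential :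
    volume (critSet weightedPotential ∩ Estar weightedPotential) = 0 := by
  refine measure_mono_null (fun p hp => ?_) (measure_iUnion_null fun i : Fin 2 =>
    volume_setOf_apply_mem_eq_zero i volume_setOf_frequently_mem_moat)
  by_contra hfreq
  simp only [mem_iUnion, mem_ofPred_eq, not_exists, Filter.not_frequently,
    Filter.eventually_atTop] at hfreq
  refine notMem_Estar_weightedPotential hp.1 (fun i => ?_) hp.2
  obtain ⟨N, hN⟩ := hfreq i
  exact ⟨N, fun m hm hmem => hN m hm ⟨hmem, hp.1.1 i⟩⟩

/-- The product of two copies of `moatFreeSet`: a set of positive measure of critical points of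
`weightedPotential`. -/
def moatFreeSquare : Set (EuclideanSpace ℝ (Fin 2)) := {p | ∀ i, p i ∈ moatFreeSet}

lemma measurableSet_moatFreeSquare : MeasurableSet moatFreeSquare :=
  measurableSet_setOfPred.2 (Measurable.forall fun i => measurableSet_setOfPred.1
    ((EuclideanSpace.proj (𝕜 := ℝ) i).continuous.measurable measurableSet_moatFreeSet))

lemma volume_moatFreeSquare_pos : 0 < volume moatFreeSquare := by
  rw [moatFreeSquare, volume_setOf_forall_apply_mem]
  exact CanonicallyOrderedAdd.prod_pos.2 fun _ _ => volume_moatFreeSet_pos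

lemma moatFreeSquare_subset_critSet : moatFreeSquare ⊆ critSet weightedPotential := fun _ hp =>
  mem_critSet_weightedPotential_iff.2 ⟨fun i => (hp i).1, fun i =>
    deriv_potential_of_forall_notMem_moat (notMem_moat_of_mem_moatFreeSet (hp i))⟩

lemma weightedPotential_eq_ofDigits {p : EuclideanSpace ℝ (Fin 2)} (hp : p ∈ moatFreeSquare) :
    weightedPotential p = Real.ofDigits (interleavedDigits p) := by
  have hterm (m : ℕ) :
      ∑ i : Fin 2, 2 ^ (i : ℕ) * layer m (p i) = Real.ofDigitsTerm (interleavedDigits p) m := by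
    simp only [layer_eq_digit (hp _).1.1 (notMem_moat_of_mem_moatFreeSet (hp _) m),
      Real.ofDigitsTerm, interleavedDigits, finFunctionFinEquiv_apply, Nat.cast_sum, Nat.cast_mul,
      Nat.cast_pow, Nat.cast_ofNat, Finset.sum_mul]
    refine Finset.sum_congr rfl fun i _ => ?_
    norm_num
    ring
  calc weightedPotential p = ∑ i : Fin 2, ∑' m, 2 ^ (i : ℕ) * layer m (p i) := by
        simp only [weightedPotential, potential, tsum_mul_left]
    _ = ∑' m, ∑ i : Fin 2, 2 ^ (i : ℕ) * layer m (p i) :=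
        (Summable.tsum_finsetSum fun i _ => (summable_layer (p i)).mul_left _).symm
    _ = Real.ofDigits (interleavedDigits p) := by simp only [hterm, Real.ofDigits]

lemma map_weightedPotential_restrict_moatFreeSquare_absolutelyContinuous :
    (volume.restrict moatFreeSquare).map weightedPotential ≪ volume := by
  have hae : weightedPotential =ᵐ[volume.restrict moatFreeSquare]
      fun p => Real.ofDigits (interleavedDigits p) :=
    (ae_restrict_mem measurableSet_moatFreeSquare).mono fun _ => weightedPotential_eq_ofDigits
  rw [Measure.map_congr hae]
  refine map_ofDigits_absolutelyContinuous (C := 4) (by norm_num)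
    (measurable_weightedPotential.aemeasurable.congr hae) fun n w => ?_
  rw [Measure.restrict_apply' measurableSet_moatFreeSquare]
  exact volume_setOf_interleavedDigits_eq_le (K := moatFreeSquare)
    (fun _ hp i => moatFreeSet_subset_Ico (hp i)) n w

end Counterexample

end SardCounterexample

/-- There exists `f : [0,1]² → ℝ` of class `C^{1,α}` for every `α ∈ (0,1)` which has the
weak Sard property but not the relaxed Sard property. -/
theorem exists_C1Holder_weakSard_not_relaxedSard :
    ∃ f : EuclideanSpace ℝ (Fin 2) → ℝ,
      (∀ α ∈ Set.Ioo (0:ℝ) 1, IsC1Holder f α) ∧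
      (Measure.map f (volume.restrict (critSet f ∩ Estar f))).MutuallySingular volume ∧
      ¬ (Measure.map f (volume.restrict (critSet f))).MutuallySingular volume := by
  open SardCounterexample in
  refine ⟨weightedPotential, fun α hα => ?_, ?_, fun hsing => ?_⟩
  · exact isC1Holder_weightedPotential (α := ⟨α, hα.1.le⟩) hα.1 hα.2
  · rw [Measure.restrict_eq_zero.2 volume_critSet_inter_Estar_weightedPotential, Measure.map_zero]
    exact Measure.MutuallySingular.zero_left
  · have hle : (volume.restrict moatFreeSquare).map weightedPotential ≤
        (volume.restrict (critSet weightedPotential)).map weightedPotential :=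
      Measure.map_mono (Measure.restrict_mono_set _ moatFreeSquare_subset_critSet)
        measurable_weightedPotential
    have hzero := Measure.eq_zero_of_absolutelyContinuous_of_mutuallySingular
      map_weightedPotential_restrict_moatFreeSquare_absolutelyContinuous
      (hsing.mono_ac hle.absolutelyContinuous .rfl)
    rw [Measure.map_eq_zero_iff measurable_weightedPotential.aemeasurable,
      Measure.restrict_eq_zero] at hzero
    exact volume_moatFreeSquare_pos.ne' hzero
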